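/- arXiv:2509.02963 — 2 statements merged into one kernel-verified Lean document; each statement's English description precedes it below -/
import Mathlib

section
/- For a linearly dependent tuple E, the Minkowski rank of E equals dim ⟨E⟩ if and only if every basis of E is a BK-set. -/
/-!
Submodularity of dimension shows that, inside a linearly independent set, subsets of defect `0`
are closed under union (`defect_union_eq_zero`). If `B` is a basis and `e ∉ B`, then `L e` lies in
the span of some subset of `B` of defect `0`, since adjoining `e` to it must make the defect
negative (`exists_tight_of_notMem`). Taking the union of these subsets gives one subset `U` of `B`
with `|U| = dim ⟨U⟩` whose span contains `L e` for every `e ∉ B` (`exists_tight_cover`).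

Two facts follow. First, every basis spans `⟨E⟩`. Second, an independent set `S` has at most
`dim ⟨U⟩ = |U|` elements outside `B \ U`, since they all lie in `⟨U⟩`; hence `|S| ≤ |B|`, and
every basis has cardinality the Minkowski rank (`card_le_of_isBasisSet`). So both sides of the
equivalence say that `|B| = dim ⟨B⟩` for a basis `B`.
-/

namespace Mink

variable (K : Type*) [Field K] {V : Type*} [AddCommGroup V] [Module K V] {ι : Type*}

/-- The defect of a subset `S` of the index set: `dim ⟨S⟩ - |S|`,
where `⟨S⟩ = ∑ i ∈ S, L i`. -/
noncomputable def defect (L : ι → Submodule K V) (S : Finset ι) : ℤ :=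
  (Module.finrank K ↥(S.sup L) : ℤ) - S.card

/-- `S` is linearly independent in the sense of Minkowski:
every subset of `S` has non-negative defect. -/
def Indep (L : ι → Submodule K V) (S : Finset ι) : Prop :=
  ∀ T ⊆ S, 0 ≤ defect K L T

/-- A BK-set: a linearly independent subset with defect 0. -/
def BKSet (L : ι → Submodule K V) (S : Finset ι) : Prop :=
  Indep K L S ∧ defect K L S = 0

/-- A circuit: a minimal-by-inclusion linearly dependent subset. -/
def Circuit (L : ι → Submodule K V) (C : Finset ι) : Prop :=
  ¬ Indep K L C ∧ ∀ T ⊂ C, Indep K L T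

/-- A basis: a maximal-by-inclusion linearly independent subset. -/
def IsBasisSet (L : ι → Submodule K V) (B : Finset ι) : Prop :=
  Indep K L B ∧ ∀ S : Finset ι, Indep K L S → B ⊆ S → S = B

open Classical in
/-- The Minkowski rank: the maximal cardinality of a linearly independent subset. -/
noncomputable def minkRank [Fintype ι] (L : ι → Submodule K V) : ℕ :=
  ((Finset.univ : Finset (Finset ι)).filter fun S => Indep K L S).sup Finset.card

variable {K}

theorem card_le_finrank_of_indep {L : ι → Submodule K V} {S : Finset ι} (h : Indep K L S) :
    S.card ≤ Module.finrank K ↥(S.sup L) := by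
  have := h S subset_rfl
  unfold defect at this
  omega

theorem Indep.mono {L : ι → Submodule K V} {S T : Finset ι} (h : Indep K L S) (hT : T ⊆ S) :
    Indep K L T :=
  fun R hR => h R (hR.trans hT)

section

variable [FiniteDimensional K V]

open Classical in
theorem defect_union_add_inter_le (L : ι → Submodule K V) (S T : Finset ι) :
    defect K L (S ∪ T) + defect K L (S ∩ T) ≤ defect K L S + defect K L T := by
  have h1 := Submodule.finrank_sup_add_finrank_inf_eq (S.sup L) (T.sup L)
  have h2 : Module.finrank K ↥((S ∩ T).sup L) ≤ Module.finrank K ↥(S.sup L ⊓ T.sup L) :=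
    Submodule.finrank_mono (le_inf (Finset.sup_mono Finset.inter_subset_left)
      (Finset.sup_mono Finset.inter_subset_right))
  have h3 := Finset.card_union_add_card_inter S T
  unfold defect
  rw [Finset.sup_union]
  omega

open Classical in
theorem defect_union_eq_zero {L : ι → Submodule K V} {B S T : Finset ι} (hB : Indep K L B)
    (hS : S ⊆ B) (hT : T ⊆ B) (hS0 : defect K L S = 0) (hT0 : defect K L T = 0) :
    defect K L (S ∪ T) = 0 := by
  have h1 := defect_union_add_inter_le L S T
  have h2 := hB _ (Finset.union_subset hS hT)
  have h3 := hB (S ∩ T) (Finset.inter_subset_left.trans hS)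
  omega

theorem exists_tight_of_notMem {L : ι → Submodule K V} {B : Finset ι} (hB : IsBasisSet K L B)
    {e : ι} (he : e ∉ B) : ∃ T ⊆ B, defect K L T = 0 ∧ L e ≤ T.sup L := by
  classical
  have hdep : ¬ Indep K L (insert e B) := fun h =>
    he (hB.2 _ h (Finset.subset_insert e B) ▸ Finset.mem_insert_self e B)
  unfold Indep at hdep
  push Not at hdep
  obtain ⟨R, hR, hneg⟩ := hdep
  have heR : e ∈ R := by
    by_contra h
    exact absurd (hB.1 R ((Finset.subset_insert_iff_of_notMem h).1 hR)) (not_le.2 hneg)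
  have hT : R.erase e ⊆ B := Finset.subset_insert_iff.1 hR
  have h0 := hB.1 _ hT
  have hle : (R.erase e).sup L ≤ R.sup L := Finset.sup_mono (Finset.erase_subset e R)
  have hrank := Submodule.finrank_mono hle
  have hcard := Finset.card_erase_add_one heR
  unfold defect at hneg h0
  refine ⟨R.erase e, hT, by unfold defect; omega, ?_⟩
  rw [Submodule.eq_of_le_of_finrank_eq hle (by omega)]
  exact Finset.le_sup heR

theorem exists_tight_cover [Fintype ι] {L : ι → Submodule K V} {B : Finset ι}
    (hB : IsBasisSet K L B) :
    ∃ U ⊆ B, defect K L U = 0 ∧ ∀ e, e ∉ B → L e ≤ U.sup L := by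
  classical
  suffices h : ∀ F : Finset ι, ∃ U ⊆ B, defect K L U = 0 ∧ ∀ e ∈ F, e ∉ B → L e ≤ U.sup L by
    obtain ⟨U, hU, h0, hc⟩ := h Finset.univ
    exact ⟨U, hU, h0, fun e => hc e (Finset.mem_univ e)⟩
  intro F
  induction F using Finset.induction_on with
  | empty => exact ⟨∅, Finset.empty_subset B, by simp [defect], by simp⟩
  | insert a F _ ih =>
    obtain ⟨U, hU, h0, hc⟩ := ih
    by_cases ha : a ∈ B
    · refine ⟨U, hU, h0, fun e he heB => ?_⟩
      rcases Finset.mem_insert.1 he with rfl | he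
      · exact absurd ha heB
      · exact hc e he heB
    · obtain ⟨T, hT, hT0, haT⟩ := exists_tight_of_notMem hB ha
      refine ⟨U ∪ T, Finset.union_subset hU hT, defect_union_eq_zero hB.1 hU hT h0 hT0,
        fun e he heB => ?_⟩
      rw [Finset.sup_union]
      rcases Finset.mem_insert.1 he with rfl | he
      · exact haT.trans le_sup_right
      · exact (hc e he heB).trans le_sup_left

theorem sup_eq_of_isBasisSet [Fintype ι] {L : ι → Submodule K V} {B : Finset ι}
    (hB : IsBasisSet K L B) : B.sup L = (Finset.univ : Finset ι).sup L := by
  refine le_antisymm (Finset.sup_mono (Finset.subset_univ B)) (Finset.sup_le fun e _ => ?_)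
  by_cases he : e ∈ B
  · exact Finset.le_sup he
  · obtain ⟨T, hT, -, hle⟩ := exists_tight_of_notMem hB he
    exact hle.trans (Finset.sup_mono hT)

theorem card_le_of_isBasisSet [Fintype ι] {L : ι → Submodule K V} {B S : Finset ι}
    (hB : IsBasisSet K L B) (hS : Indep K L S) : S.card ≤ B.card := by
  classical
  obtain ⟨U, hU, h0, hc⟩ := exists_tight_cover hB
  -- The part of `S` outside `B \ U` is independent and spans a subspace of `⟨U⟩`.
  have h1 := card_le_finrank_of_indep (hS.mono (Finset.sdiff_subset (s := S) (t := B \ U)))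
  have h2 : (S \ (B \ U)).sup L ≤ U.sup L := by
    refine Finset.sup_le fun e he => ?_
    by_cases heB : e ∈ B
    · have heU : e ∈ U := by
        by_contra h
        exact (Finset.mem_sdiff.1 he).2 (Finset.mem_sdiff.2 ⟨heB, h⟩)
      exact Finset.le_sup heU
    · exact hc e heB
  have h3 := Submodule.finrank_mono h2
  have h4 := Finset.card_sdiff_add_card_inter S (B \ U)
  have h5 : (S ∩ (B \ U)).card ≤ (B \ U).card := Finset.card_le_card Finset.inter_subset_right
  have h6 := Finset.card_sdiff_add_card_eq_card hU
  unfold defect at h0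
  omega

theorem minkRank_eq_card [Fintype ι] {L : ι → Submodule K V} {B : Finset ι}
    (hB : IsBasisSet K L B) : minkRank K L = B.card := by
  classical
  unfold minkRank
  refine le_antisymm (Finset.sup_le fun S hS => ?_) ?_
  · exact card_le_of_isBasisSet hB (Finset.mem_filter.1 hS).2
  · exact Finset.le_sup (f := Finset.card) (Finset.mem_filter.2 ⟨Finset.mem_univ B, hB.1⟩)

end

theorem exists_isBasisSet [Fintype ι] (L : ι → Submodule K V) :
    ∃ B : Finset ι, IsBasisSet K L B := by
  have hne : {S : Finset ι | Indep K L S}.Nonempty :=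
    ⟨∅, fun T hT => by simp [Finset.subset_empty.1 hT, defect]⟩
  obtain ⟨B, hB⟩ := (Set.toFinite {S : Finset ι | Indep K L S}).exists_maximal hne
  exact ⟨B, hB.prop, fun S hS hBS => (hB.eq_of_le hS hBS).symm⟩

variable (K)

/-- for a linearly dependent tuple `E`, the Minkowski rank equals
`dim ⟨E⟩` iff every basis of `E` is a BK-set. -/
theorem statement9 [FiniteDimensional K V] [Fintype ι] (L : ι → Submodule K V)
    (hdep : ¬ Indep K L (Finset.univ : Finset ι)) :
    minkRank K L = Module.finrank K ↥((Finset.univ : Finset ι).sup L) ↔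
      ∀ B : Finset ι, IsBasisSet K L B → BKSet K L B := by
  constructor
  · intro h B hB
    refine ⟨hB.1, ?_⟩
    rw [minkRank_eq_card hB, ← sup_eq_of_isBasisSet hB] at h
    unfold defect
    omega
  · intro h
    obtain ⟨B, hB⟩ := exists_isBasisSet L
    have h0 := (h B hB).2
    rw [minkRank_eq_card hB, ← sup_eq_of_isBasisSet hB]
    unfold defect at h0
    omega

end Mink
end

section
/- If the tuple E is linearly dependent, then among all subsets of E attaining the minimal defect min_{T ⊆ E} δ(T), there is a unique minimal-by-inclusion one: if S and S' both attain the minimal defect and are minimal by inclusion with this property, then S = S'. -/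
/-!
The defect is submodular, because dimension is submodular on subspaces and cardinality is modular
on sets (`defect_union_add_defect_inter_le`). Hence the sets attaining the minimal defect are
closed under intersection, so a minimal one among them is contained in any other.
-/

namespace Mink

variable (K : Type*) [Field K] {V : Type*} [AddCommGroup V] [Module K V] {ι : Type*}

/-- Submodularity of the defect: `⟨S ∪ T⟩ = ⟨S⟩ + ⟨T⟩` while `⟨S ∩ T⟩ ⊆ ⟨S⟩ ∩ ⟨T⟩`. -/
theorem defect_union_add_defect_inter_le [DecidableEq ι] [FiniteDimensional K V]
    (L : ι → Submodule K V) (S T : Finset ι) :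
    defect K L (S ∪ T) + defect K L (S ∩ T) ≤ defect K L S + defect K L T := by
  have hdim := Submodule.finrank_sup_add_finrank_inf_eq (S.sup L) (T.sup L)
  have hinter : Module.finrank K ↥((S ∩ T).sup L) ≤ Module.finrank K ↥(S.sup L ⊓ T.sup L) :=
    Submodule.finrank_mono
      (le_inf (Finset.sup_mono Finset.inter_subset_left)
        (Finset.sup_mono Finset.inter_subset_right))
  have hcard := Finset.card_union_add_card_inter S T
  unfold defect
  rw [Finset.sup_union]
  omega

/-- if the tuple `E` is linearly dependent, then among the subsets
attaining the minimal defect there is a unique minimal-by-inclusion one. -/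
theorem statement17 [FiniteDimensional K V] [Fintype ι] (L : ι → Submodule K V)
    (hdep : ¬ Indep K L (Finset.univ : Finset ι))
    (S S' : Finset ι)
    (hSmin : ∀ T : Finset ι, defect K L S ≤ defect K L T)
    (hSincl : ∀ T ⊂ S, ¬ ∀ T' : Finset ι, defect K L T ≤ defect K L T')
    (hS'min : ∀ T : Finset ι, defect K L S' ≤ defect K L T)
    (hS'incl : ∀ T ⊂ S', ¬ ∀ T' : Finset ι, defect K L T ≤ defect K L T') :
    S = S' := by
  classical
  have hsub := defect_union_add_defect_inter_le K L S S'
  -- As `S ∪ S'` has at least the minimal defect, submodularity forces `S ∩ S'` to attain it.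
  have hinter : ∀ T, defect K L (S ∩ S') ≤ defect K L T := fun T => by
    linarith [hS'min (S ∪ S'), hSmin T]
  have hS : S ∩ S' = S := by
    by_contra hne
    exact hSincl _ (Finset.inter_subset_left.ssubset_of_ne hne) hinter
  have hS' : S ∩ S' = S' := by
    by_contra hne
    exact hS'incl _ (Finset.inter_subset_right.ssubset_of_ne hne) hinter
  exact hS.symm.trans hS'

end Mink
end
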